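/- arXiv:1707.08162 — 4 statements merged into one kernel-verified Lean document; each statement's English description precedes it below -/
import Mathlib

section
/- Assume in addition L = ℓ − k > 0, and set A_α = max(0, α). Then the double-zero location x(α) satisfies −k/L > 1 and, for all sufficiently small α: if α < 0 then x(α) < 0 = A_α (so x(α) does not belong to the half-closed interval σ(α) = [A_α, λ)); if α = 0 then x(0) = 0 = A_α; and if α > 0 then x(α) > α = A_α (so x(α) lies in the interior of σ(α)). -/
/-!
The curve `α ↦ xc α` passes through the origin with slope `-(k / L) > 1`, i.e. it crosses the
diagonal there from below to above. Hence `xc α < α < 0` just left of `0` and `α < xc α` just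
right of it.
-/

open Topology Asymptotics

theorem one_lt_neg_div_sub {K : Type*} [Field K] [LinearOrder K] [IsStrictOrderedRing K] {ℓ k : K}
    (hℓ : ℓ < 0) (hkℓ : k < ℓ) : 1 < -(k / (ℓ - k)) := by
  rw [← neg_div, one_lt_div (sub_pos.mpr hkℓ)]
  linarith

section FirstOrderExpansion

variable {𝕜 E : Type*} [NontriviallyNormedField 𝕜] [NormedAddCommGroup E] [NormedSpace 𝕜 E]
  {f : 𝕜 → E} {a : 𝕜} {y m : E} {n : ℕ}

theorem eq_of_isBigO_sub_affine (hn : n ≠ 0)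
    (hf : (fun x ↦ f x - (y + (x - a) • m)) =O[𝓝 a] fun x ↦ ‖x - a‖ ^ n) : f a = y := by
  simpa [sub_eq_zero] using hf.eq_zero_of_norm_pow hn

theorem hasDerivAt_of_isBigO_sub_affine (hn : 1 < n)
    (hf : (fun x ↦ f x - (y + (x - a) • m)) =O[𝓝 a] fun x ↦ ‖x - a‖ ^ n) :
    HasDerivAt f m a := by
  have remainder : HasDerivAt (fun x ↦ f x - (y + (x - a) • m)) 0 a := by
    simpa using (hf.hasFDerivAt hn).hasDerivAt
  have affine : HasDerivAt (fun x ↦ y + (x - a) • m) m a := by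
    simpa using (((hasDerivAt_id a).sub_const a).smul_const m).const_add y
  simpa using remainder.fun_add affine

end FirstOrderExpansion

theorem eventually_sign_sub_self_eq_of_hasDerivAt {f : ℝ → ℝ} {a m : ℝ} (hm : 1 < m)
    (hfa : f a = a) (hf : HasDerivAt f m a) :
    ∀ᶠ x in 𝓝 a, SignType.sign (f x - x) = SignType.sign (x - a) := by
  have hderiv : deriv (fun x ↦ f x - x) a = m - 1 := (hf.fun_sub (hasDerivAt_id' a)).deriv
  exact eventually_nhdsWithin_sign_eq_of_deriv_pos (hderiv ▸ sub_pos.mpr hm) (sub_eq_zero.mpr hfa)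

theorem stmt_7_general {ℓ k : ℝ} (hℓ : ℓ < 0) (hkℓ : k < ℓ) {xc : ℝ → ℝ} (hxc₀ : xc 0 = 0)
    (hxc : HasDerivAt xc (-(k / (ℓ - k))) 0) :
    -(k / (ℓ - k)) > 1 ∧
    ∃ ε > (0 : ℝ), ∀ α : ℝ, |α| < ε →
      (α < 0 → xc α < 0) ∧
      (α = 0 → xc 0 = 0) ∧
      (0 < α → α < xc α) := by
  have slope_gt_one := one_lt_neg_div_sub hℓ hkℓ
  obtain ⟨ε, hε, sign_eq⟩ := Metric.eventually_nhds_iff.mp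
    (eventually_sign_sub_self_eq_of_hasDerivAt slope_gt_one hxc₀ hxc)
  simp only [Real.dist_eq, sub_zero] at sign_eq
  refine ⟨slope_gt_one, ε, hε, fun α hα ↦ ⟨fun hneg ↦ ?_, fun _ ↦ hxc₀, fun hpos ↦ ?_⟩⟩
  · have below_diagonal : xc α - α < 0 :=
      sign_eq_neg_one_iff.mp ((sign_eq hα).trans (sign_neg hneg))
    linarith
  · exact sub_pos.mp (sign_eq_one_iff.mp ((sign_eq hα).trans (sign_pos hpos)))

theorem stmt_7 (ℓ k L : ℝ) (hℓ : ℓ < 0) (hk : k < 0) (hLdef : L = ℓ - k) (hLpos : 0 < L)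
    (P Q : ℝ → ℝ)
    (hP : ContDiffAt ℝ 3 P 0) (hQ : ContDiffAt ℝ 3 Q 0)
    (hP0 : P 0 = 0) (hP1 : deriv P 0 = 0) (hP2 : deriv (deriv P) 0 = 2 * ℓ)
    (hQ0 : Q 0 = 0) (hQ1 : deriv Q 0 = 0) (hQ2 : deriv (deriv Q) 0 = 2 * k)
    (ε₀ : ℝ) (hε₀ : 0 < ε₀) (xc β₁ : ℝ → ℝ)
    (hxc : ContDiffOn ℝ 1 xc (Set.Ioo (-ε₀) ε₀))
    (hβ₁ : ContDiffOn ℝ 1 β₁ (Set.Ioo (-ε₀) ε₀))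
    (hasym : ∃ C > (0 : ℝ), ∀ α ∈ Set.Ioo (-ε₀) ε₀,
      |xc α + (k / L) * α| ≤ C * α ^ 2 ∧ |β₁ α - (k * ℓ / L) * α ^ 2| ≤ C * |α| ^ 3)
    (hdouble : ∀ α ∈ Set.Ioo (-ε₀) ε₀,
      β₁ α + P (xc α) - Q (xc α - α) = 0 ∧
      deriv (fun x => β₁ α + P x - Q (x - α)) (xc α) = 0) :
    -(k / L) > 1 ∧
    ∃ ε > (0 : ℝ), ∀ α : ℝ, |α| < ε →
      (α < 0 → xc α < 0) ∧
      (α = 0 → xc 0 = 0) ∧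
      (0 < α → α < xc α) := by
  subst hLdef
  obtain ⟨C, -, hC⟩ := hasym
  have expansion : (fun α ↦ xc α - (0 + (α - 0) • -(k / (ℓ - k)))) =O[𝓝 0]
      fun α ↦ ‖α - 0‖ ^ 2 := by
    refine .of_bound C ?_
    filter_upwards [Ioo_mem_nhds (neg_lt_zero.mpr hε₀) hε₀] with α hα
    simpa [mul_comm α] using (hC α hα).1
  exact stmt_7_general hℓ (sub_pos.mp hLpos) (eq_of_isBigO_sub_affine two_ne_zero expansion)
    (hasDerivAt_of_isBigO_sub_affine one_lt_two expansion)
end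

section
/- Assume in addition L = ℓ − k > 0. There exists a function β₂, defined on a neighborhood of 0 with β₂(α) = −ℓ·α² + O(α³), such that for all sufficiently small (α, β) with β < β₁(α), the smaller zero x⁻ = x⁻(α, β) of f_{α,β} satisfies: if α ≤ 0, then x⁻ < A_α = 0 (so x⁻ ∉ σ(α)); and if α > 0, then x⁻ < α when β < β₂(α), x⁻ = α when β = β₂(α), and x⁻ > α (so x⁻ lies in the interior of σ(α)) when β₂(α) < β < β₁(α). -/
/-!
Near the origin `f = f_{α,β}` has second derivative close to `2 (ℓ - k) > 0`, so `f'` is strictly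
increasing. Rolle's theorem gives a critical point `c` between the two zeros, and `f` is strictly
decreasing to the left of `c`. The position of the smaller zero relative to a point `a` is therefore
governed by the sign of `f' a` and, when `f' a < 0` (that is, `a < c`), by the sign of `f a`.
For `α ≤ 0` take `a = 0`, where `f' 0 = -Q' (-α) ≥ 0`. For `α > 0` take `a = α`, where
`f' α = P' α < 0` and `f α = β + P α`, so that the crossing curve is exactly `β₂ = -P`.
-/

open Set Filter Asymptotics
open scoped Topology Nat

section Taylor

variable {E : Type*} [NormedAddCommGroup E] [NormedSpace ℝ E]

lemma isBigO_sub_sum_iteratedDeriv {f : ℝ → E} {x₀ : ℝ} {n : ℕ}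
    (hf : ContDiffAt ℝ (n + 1) f x₀) :
    (fun x ↦ f x - ∑ j ∈ Finset.range (n + 1), ((j ! : ℝ)⁻¹ * (x - x₀) ^ j) • iteratedDeriv j f x₀)
      =O[𝓝 x₀] fun x ↦ (x - x₀) ^ (n + 1) := by
  obtain ⟨r, hr, hball⟩ := Metric.eventually_nhds_iff_ball.1
    (hf.eventually (by exact_mod_cast ENat.natCast_ne_top (n + 1)))
  set s := Metric.ball x₀ r
  have hx₀ : x₀ ∈ s := Metric.mem_ball_self hr
  have hfs : ContDiffOn ℝ ((n + 1 : ℕ) : ℕ∞) f s := fun x hx ↦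
    (by exact_mod_cast hball x hx : ContDiffAt ℝ ((n + 1 : ℕ) : ℕ∞) f x).contDiffWithinAt
  have hremainder := (taylor_isLittleO (convex_ball x₀ r) hx₀ hfs).isBigO
  rw [Metric.isOpen_ball.nhdsWithin_eq hx₀] at hremainder
  have hlast : (fun x ↦ (((n + 1)! : ℝ)⁻¹ * (x - x₀) ^ (n + 1)) • iteratedDeriv (n + 1) f x₀)
      =O[𝓝 x₀] fun x ↦ (x - x₀) ^ (n + 1) := by
    simpa using ((isBigO_refl (fun x ↦ (x - x₀) ^ (n + 1)) (𝓝 x₀)).const_mul_left _).smul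
      (isBigO_const_one ℝ (iteratedDeriv (n + 1) f x₀) (𝓝 x₀))
  refine (hremainder.add hlast).congr_left fun x ↦ ?_
  rw [taylor_within_apply, Finset.sum_range_succ]
  simp only [iteratedDerivWithin_of_isOpen Metric.isOpen_ball hx₀]
  abel

end Taylor

lemma isBigO_sub_mul_sq {f : ℝ → ℝ} {c : ℝ} (hf : ContDiffAt ℝ 3 f 0) (hf₀ : f 0 = 0)
    (hf₁ : deriv f 0 = 0) (hf₂ : deriv (deriv f) 0 = 2 * c) :
    (fun x ↦ f x - c * x ^ 2) =O[𝓝 0] fun x ↦ x ^ 3 := by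
  have htaylor := isBigO_sub_sum_iteratedDeriv (n := 2) (by exact_mod_cast hf)
  refine htaylor.congr (fun x ↦ ?_) fun x ↦ by simp
  simp only [Finset.sum_range_succ, Finset.sum_range_zero, iteratedDeriv_succ, iteratedDeriv_zero,
    hf₀, hf₁, hf₂, Nat.factorial, smul_eq_mul]
  push_cast
  ring

section StrictMonoDeriv

variable {s : Set ℝ} {f f' : ℝ → ℝ} {a b x : ℝ}

lemma exists_deriv_eq_zero_and_strictAntiOn (hs : s.OrdConnected)
    (hf : ∀ x ∈ s, HasDerivAt f (f' x) x) (hf' : StrictMonoOn f' s)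
    (ha : a ∈ s) (hb : b ∈ s) (hab : a < b) (hfab : f a = f b) :
    ∃ c ∈ Ioo a b, c ∈ s ∧ f' c = 0 ∧ StrictAntiOn f (s ∩ Iic c) := by
  have hcont : ContinuousOn f s := fun x hx ↦ (hf x hx).continuousAt.continuousWithinAt
  have hIcc : Icc a b ⊆ s := hs.out ha hb
  obtain ⟨c, hc, hc₀⟩ := exists_hasDerivAt_eq_zero hab (hcont.mono hIcc) hfab
    fun x hx ↦ hf x (hIcc (Ioo_subset_Icc_self hx))
  have hcs : c ∈ s := hIcc (Ioo_subset_Icc_self hc)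
  refine ⟨c, hc, hcs, hc₀, strictAntiOn_of_hasDerivWithinAt_neg (f' := f')
    (hs.inter ordConnected_Iic).convex (hcont.mono inter_subset_left)
    (fun x hx ↦ (hf x (interior_subset hx).1).hasDerivWithinAt) fun x hx ↦ ?_⟩
  rw [interior_inter, interior_Iic] at hx
  exact (hf' (interior_subset hx.1) hcs hx.2).trans_eq hc₀

lemma left_lt_of_deriv_nonneg (hs : s.OrdConnected)
    (hf : ∀ x ∈ s, HasDerivAt f (f' x) x) (hf' : StrictMonoOn f' s)
    (ha : a ∈ s) (hb : b ∈ s) (hab : a < b) (hfab : f a = f b)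
    (hx : x ∈ s) (hx₀ : 0 ≤ f' x) : a < x := by
  obtain ⟨c, hc, hcs, hc₀, -⟩ := exists_deriv_eq_zero_and_strictAntiOn hs hf hf' ha hb hab hfab
  exact hc.1.trans_le ((hf'.le_iff_le hcs hx).1 (hc₀.trans_le hx₀))

lemma strictAntiOn_pair_of_deriv_neg (hs : s.OrdConnected)
    (hf : ∀ x ∈ s, HasDerivAt f (f' x) x) (hf' : StrictMonoOn f' s)
    (ha : a ∈ s) (hb : b ∈ s) (hab : a < b) (hfab : f a = f b)
    (hx : x ∈ s) (hx₀ : f' x < 0) : StrictAntiOn f {a, x} := by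
  obtain ⟨c, hc, hcs, hc₀, hanti⟩ :=
    exists_deriv_eq_zero_and_strictAntiOn hs hf hf' ha hb hab hfab
  have hxc : x < c := (hf'.lt_iff_lt hx hcs).1 (hx₀.trans_eq hc₀.symm)
  exact hanti.mono (pair_subset ⟨ha, hc.1.le⟩ ⟨hx, hxc.le⟩)

end StrictMonoDeriv

/-- The displacement function `f_{α,β}`. -/
def displacement (P Q : ℝ → ℝ) (α β x : ℝ) : ℝ := β + P x - Q (x - α)

/-- The derivative of the displacement function `f_{α,β}`; it does not depend on `β`. It is the
actual derivative only where `P` and `Q (· - α)` are differentiable. -/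
noncomputable def displacementDeriv (P Q : ℝ → ℝ) (α x : ℝ) : ℝ := deriv P x - deriv Q (x - α)

section Displacement

variable {P Q : ℝ → ℝ}

lemma hasDerivAt_displacement {α x : ℝ} (β : ℝ) (hP : DifferentiableAt ℝ P x)
    (hQ : DifferentiableAt ℝ Q (x - α)) :
    HasDerivAt (displacement P Q α β) (displacementDeriv P Q α x) x :=
  (hP.hasDerivAt.const_add β).sub (hQ.hasDerivAt.comp_sub_const x α)

lemma hasDerivAt_displacementDeriv {α x : ℝ} (hP : DifferentiableAt ℝ (deriv P) x)
    (hQ : DifferentiableAt ℝ (deriv Q) (x - α)) :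
    HasDerivAt (displacementDeriv P Q α) (deriv (deriv P) x - deriv (deriv Q) (x - α)) x :=
  hP.hasDerivAt.sub (hQ.hasDerivAt.comp_sub_const x α)

lemma eventually_contDiffAt_and_deriv_deriv_lt (hP : ContDiffAt ℝ 2 P 0) (hQ : ContDiffAt ℝ 2 Q 0)
    (hlt : deriv (deriv Q) 0 < deriv (deriv P) 0) :
    ∀ᶠ p : ℝ × ℝ in 𝓝 (0, 0), ContDiffAt ℝ 2 P p.2 ∧ ContDiffAt ℝ 2 Q (p.2 - p.1) ∧
      deriv (deriv Q) (p.2 - p.1) < deriv (deriv P) p.2 := by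
  have hsnd : Tendsto (fun p : ℝ × ℝ ↦ p.2) (𝓝 (0, 0)) (𝓝 0) := continuous_snd.tendsto _
  have hsub : Tendsto (fun p : ℝ × ℝ ↦ p.2 - p.1) (𝓝 (0, 0)) (𝓝 0) :=
    (continuous_snd.sub continuous_fst).tendsto' _ _ (by simp)
  have hP₂ : ContinuousAt (deriv (deriv P)) 0 :=
    ((hP.derivWithin (m := 1) (by norm_num)).derivWithin (m := 0) (by norm_num)).continuousAt
  have hQ₂ : ContinuousAt (deriv (deriv Q)) 0 :=
    ((hQ.derivWithin (m := 1) (by norm_num)).derivWithin (m := 0) (by norm_num)).continuousAt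
  exact (hsnd.eventually (hP.eventually (by simp))).and
    ((hsub.eventually (hQ.eventually (by simp))).and
      ((hQ₂.tendsto.comp hsub).eventually_lt (hP₂.tendsto.comp hsnd) hlt))

lemma exists_hasDerivAt_displacement_and_strictMonoOn
    (hP : ContDiffAt ℝ 2 P 0) (hQ : ContDiffAt ℝ 2 Q 0)
    (hlt : deriv (deriv Q) 0 < deriv (deriv P) 0) :
    ∃ δ > 0, ∀ α ∈ Ioo (-δ) δ,
      (∀ β, ∀ x ∈ Ioo (-δ) δ,
        HasDerivAt (displacement P Q α β) (displacementDeriv P Q α x) x) ∧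
      StrictMonoOn (displacementDeriv P Q α) (Ioo (-δ) δ) := by
  obtain ⟨δ, hδ, hball⟩ :=
    Metric.eventually_nhds_iff.1 (eventually_contDiffAt_and_deriv_deriv_lt hP hQ hlt)
  refine ⟨δ, hδ, fun α hα ↦ ?_⟩
  have hnear (x) (hx : x ∈ Ioo (-δ) δ) := @hball (α, x) (by
    simpa [Prod.dist_eq, abs_lt] using And.intro hα hx)
  have hderiv (x) (hx : x ∈ Ioo (-δ) δ) : HasDerivAt (displacementDeriv P Q α)
      (deriv (deriv P) x - deriv (deriv Q) (x - α)) x :=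
    hasDerivAt_displacementDeriv
      (((hnear x hx).1.derivWithin (m := 1) (by norm_num)).differentiableAt (by simp))
      (((hnear x hx).2.1.derivWithin (m := 1) (by norm_num)).differentiableAt (by simp))
  refine ⟨fun β x hx ↦ hasDerivAt_displacement β ((hnear x hx).1.differentiableAt (by simp))
    ((hnear x hx).2.1.differentiableAt (by simp)), ?_⟩
  refine strictMonoOn_of_deriv_pos (convex_Ioo _ _)
    (fun x hx ↦ (hderiv x hx).continuousAt.continuousWithinAt) fun x hx ↦ ?_
  rw [interior_Ioo] at hx
  rw [(hderiv x hx).deriv]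
  exact sub_pos.2 (hnear x hx).2.2

lemma eventually_displacementDeriv_zero_nonneg (hP₁ : deriv P 0 = 0) (hQ₁ : deriv Q 0 = 0)
    (hQ₂ : deriv (deriv Q) 0 < 0) : ∀ᶠ α in 𝓝 0, α ≤ 0 → 0 ≤ displacementDeriv P Q α 0 := by
  have hneg : Tendsto (fun α : ℝ ↦ -α) (𝓝 0) (𝓝 0) := continuous_neg.tendsto' _ _ neg_zero
  filter_upwards [hneg.eventually (eventually_nhdsWithin_sign_eq_of_deriv_neg hQ₂ hQ₁)]
    with α hsign hα
  have hQα : deriv Q (-α) ≤ 0 := by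
    rw [← sign_nonpos_iff, hsign, sign_nonpos_iff]
    simpa using hα
  simpa [displacementDeriv, hP₁] using hQα

lemma eventually_displacementDeriv_self_neg (hP₁ : deriv P 0 = 0) (hQ₁ : deriv Q 0 = 0)
    (hP₂ : deriv (deriv P) 0 < 0) : ∀ᶠ α in 𝓝 0, 0 < α → displacementDeriv P Q α α < 0 := by
  filter_upwards [eventually_nhdsWithin_sign_eq_of_deriv_neg hP₂ hP₁] with α hsign hα
  have hPα : deriv P α < 0 := by
    rw [← sign_eq_neg_one_iff, hsign, sign_eq_neg_one_iff]
    simpa using hα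
  simpa [displacementDeriv, hQ₁] using hPα

end Displacement

theorem stmt_8_general {ℓ k : ℝ} (hℓ : ℓ < 0) (hkℓ : k < ℓ) {P Q : ℝ → ℝ}
    (hP : ContDiffAt ℝ 3 P 0) (hQ : ContDiffAt ℝ 2 Q 0)
    (hP₀ : P 0 = 0) (hP₁ : deriv P 0 = 0) (hP₂ : deriv (deriv P) 0 = 2 * ℓ)
    (hQ₀ : Q 0 = 0) (hQ₁ : deriv Q 0 = 0) (hQ₂ : deriv (deriv Q) 0 = 2 * k) :
    ∃ β₂ : ℝ → ℝ,
      (∃ C > (0 : ℝ), ∃ ε₁ > (0 : ℝ), ∀ α : ℝ, |α| < ε₁ → |β₂ α + ℓ * α ^ 2| ≤ C * |α| ^ 3) ∧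
      ∃ ε > (0 : ℝ), ∃ δ > (0 : ℝ), ∀ α β : ℝ, |α| < ε →
        ∀ xm xp : ℝ, xm < xp → xm ∈ Ioo (-δ) δ → xp ∈ Ioo (-δ) δ →
          displacement P Q α β xm = 0 → displacement P Q α β xp = 0 →
          (α ≤ 0 → xm < 0) ∧
          (0 < α → (β < β₂ α → xm < α) ∧ (β = β₂ α → xm = α) ∧ (β₂ α < β → α < xm)) := by
  refine ⟨fun α ↦ -P α, ?_, ?_⟩
  · obtain ⟨C, hC, hbound⟩ := (isBigO_sub_mul_sq hP hP₀ hP₁ hP₂).exists_pos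
    obtain ⟨ε₁, hε₁, hball⟩ := Metric.eventually_nhds_iff.1 hbound.bound
    refine ⟨C, hC, ε₁, hε₁, fun α hα ↦ ?_⟩
    simpa [neg_add_eq_sub, abs_sub_comm] using hball (y := α) (by simpa using hα)
  obtain ⟨δ, hδ, hconvex⟩ := exists_hasDerivAt_displacement_and_strictMonoOn
    (hP.of_le (by norm_num)) hQ (by linarith)
  obtain ⟨ε, hε, hsmall⟩ := Metric.eventually_nhds_iff.1
    ((eventually_mem_set.2 (Ioo_mem_nhds (neg_lt_zero.2 hδ) hδ)).and
      ((eventually_displacementDeriv_zero_nonneg hP₁ hQ₁ (by linarith)).and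
        (eventually_displacementDeriv_self_neg hP₁ hQ₁ (by linarith))))
  refine ⟨ε, hε, δ, hδ, fun α β hα xm xp hlt hxm hxp hfm hfp ↦ ?_⟩
  obtain ⟨hαδ, hnonneg, hneg⟩ := hsmall (y := α) (by simpa using hα)
  obtain ⟨hderiv, hmono⟩ := hconvex α hαδ
  have hfeq := hfm.trans hfp.symm
  refine ⟨fun hα₀ ↦ left_lt_of_deriv_nonneg ordConnected_Ioo (hderiv β) hmono hxm hxp hlt hfeq
    ⟨neg_lt_zero.2 hδ, hδ⟩ (hnonneg hα₀), fun hα₀ ↦ ?_⟩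
  have hanti := strictAntiOn_pair_of_deriv_neg ordConnected_Ioo (hderiv β) hmono hxm hxp hlt hfeq
    hαδ (hneg hα₀)
  have hfα : displacement P Q α β α = β + P α := by simp [displacement, hQ₀]
  have hxmα : xm ∈ ({xm, α} : Set ℝ) := mem_insert _ _
  have hαα : α ∈ ({xm, α} : Set ℝ) := mem_insert_of_mem _ rfl
  rw [← hanti.lt_iff_gt hαα hxmα, ← hanti.eq_iff_eq hαα hxmα, ← hanti.lt_iff_gt hxmα hαα, hfα, hfm]
  refine ⟨fun h ↦ ?_, fun h ↦ ?_, fun h ↦ ?_⟩ <;> linarith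

/- STATEMENT 8: the critical-crossing curve β = β₂(α) = −ℓα² + O(α³) for the
smaller zero x⁻ of f_{α,β}(x) = β + P(x) − Q(x − α), L = ℓ − k > 0: for small
(α, β) with β < β₁(α), if α ≤ 0 then x⁻ < 0 = A_α; if α > 0 then x⁻ < α when
β < β₂(α), x⁻ = α when β = β₂(α), and x⁻ > α when β₂(α) < β < β₁(α). -/
theorem stmt_8 (ℓ k L : ℝ) (hℓ : ℓ < 0) (hk : k < 0) (hLdef : L = ℓ - k) (hLpos : 0 < L)
    (P Q : ℝ → ℝ)
    (hP : ContDiffAt ℝ 3 P 0) (hQ : ContDiffAt ℝ 3 Q 0)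
    (hP0 : P 0 = 0) (hP1 : deriv P 0 = 0) (hP2 : deriv (deriv P) 0 = 2 * ℓ)
    (hQ0 : Q 0 = 0) (hQ1 : deriv Q 0 = 0) (hQ2 : deriv (deriv Q) 0 = 2 * k)
    (ε₀ : ℝ) (hε₀ : 0 < ε₀) (xc β₁ : ℝ → ℝ)
    (hxc : ContDiffOn ℝ 1 xc (Set.Ioo (-ε₀) ε₀))
    (hβ₁ : ContDiffOn ℝ 1 β₁ (Set.Ioo (-ε₀) ε₀))
    (hasym : ∃ C > (0 : ℝ), ∀ α ∈ Set.Ioo (-ε₀) ε₀,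
      |xc α + (k / L) * α| ≤ C * α ^ 2 ∧ |β₁ α - (k * ℓ / L) * α ^ 2| ≤ C * |α| ^ 3)
    (hdouble : ∀ α ∈ Set.Ioo (-ε₀) ε₀,
      β₁ α + P (xc α) - Q (xc α - α) = 0 ∧
      deriv (fun x => β₁ α + P x - Q (x - α)) (xc α) = 0) :
    ∃ β₂ : ℝ → ℝ,
      -- β₂(α) = −ℓ·α² + O(α³)
      (∃ C > (0 : ℝ), ∃ ε₁ > (0 : ℝ), ∀ α : ℝ, |α| < ε₁ →
        |β₂ α + ℓ * α ^ 2| ≤ C * |α| ^ 3) ∧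
      -- position of the smaller zero x⁻ relative to A_α = max(0, α)
      (∃ ε > (0 : ℝ), ∃ δ > (0 : ℝ), ∀ α β : ℝ, |α| < ε → |β| < ε → β < β₁ α →
        ∀ xm xp : ℝ, xm < xp → xm ∈ Set.Ioo (-δ) δ → xp ∈ Set.Ioo (-δ) δ →
          β + P xm - Q (xm - α) = 0 → β + P xp - Q (xp - α) = 0 →
          (∀ x ∈ Set.Ioo (-δ) δ, β + P x - Q (x - α) = 0 → (x = xm ∨ x = xp)) →
          ((α ≤ 0 → xm < 0) ∧
           (0 < α →
             (β < β₂ α → xm < α) ∧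
             (β = β₂ α → xm = α) ∧
             (β₂ α < β → α < xm)))) := by
  obtain ⟨β₂, hβ₂, ε, hε, δ, hδ, hzero⟩ :=
    stmt_8_general hℓ (by linarith) hP (hQ.of_le (by norm_num)) hP0 hP1 hP2 hQ0 hQ1 hQ2
  exact ⟨β₂, hβ₂, ε, hε, δ, hδ, fun α β hα _ _ xm xp hlt hxm hxp hfm hfp _ ↦
    hzero α β hα xm xp hlt hxm hxp hfm hfp⟩
end

section
/- Assume in addition L = ℓ − k > 0, and let β₁(α) = (kℓ/L)·α² + O(α³), β₂(α) = −ℓ·α² + O(α³) and β₃(α) = k·α² + O(α³) be the three bifurcation curves of the displacement function. Then for all sufficiently small α ≠ 0: β₁(α) > 0; if α > 0 then 0 < β₂(α) < β₁(α); and if α < 0 then β₃(α) < 0 < β₁(α). -/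
/-!
Every remainder is `o(α²)`, so near `α = 0` the curves are ordered, among themselves and relative to
the zero function, as their leading coefficients are. Those satisfy `k < 0 < -ℓ < k * ℓ / (ℓ - k)`,
the last step because the gap between the two right-hand terms is `ℓ² / (ℓ - k)`.
-/

open Asymptotics Filter Topology

theorem isLittleO_pow_of_norm_le_mul_norm_pow {𝕜 E : Type*} [NormedField 𝕜]
    [SeminormedAddCommGroup E] {f : 𝕜 → E} {C ε : ℝ} {m n : ℕ} (hmn : m < n) (hε : 0 < ε)
    (hf : ∀ x, ‖x‖ < ε → ‖f x‖ ≤ C * ‖x‖ ^ n) :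
    f =o[𝓝 0] fun x => x ^ m := by
  have hbigO : f =O[𝓝 0] fun x => x ^ n := by
    refine IsBigO.of_bound C ?_
    filter_upwards [Metric.ball_mem_nhds 0 hε] with x hx
    simpa only [norm_pow] using hf x (mem_ball_zero_iff.mp hx)
  exact hbigO.trans_isLittleO (isLittleO_pow_pow hmn)

theorem eventually_lt_of_sub_mul_isLittleO {X : Type*} {F : Filter X} {f₁ f₂ g : X → ℝ}
    {c₁ c₂ : ℝ} (hc : c₁ < c₂) (hg : ∀ᶠ x in F, 0 < g x)
    (h₁ : (fun x => f₁ x - c₁ * g x) =o[F] g) (h₂ : (fun x => f₂ x - c₂ * g x) =o[F] g) :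
    ∀ᶠ x in F, f₁ x < f₂ x := by
  have hgap : 0 < (c₂ - c₁) / 2 := half_pos (sub_pos.mpr hc)
  filter_upwards [hg, (h₂.sub h₁).bound hgap] with x hgx hbound
  rw [Real.norm_eq_abs, Real.norm_of_nonneg hgx.le] at hbound
  have hlower := (abs_le.mp hbound).1
  have hgap_mul : 0 < (c₂ - c₁) / 2 * g x := mul_pos hgap hgx
  linarith

theorem neg_lt_mul_div_sub {K : Type*} [Field K] [LinearOrder K] [IsStrictOrderedRing K]
    {ℓ k : K} (hℓ : ℓ ≠ 0) (hkℓ : k < ℓ) : -ℓ < k * ℓ / (ℓ - k) := by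
  have hL : 0 < ℓ - k := sub_pos.mpr hkℓ
  have hgap : k * ℓ / (ℓ - k) - -ℓ = ℓ ^ 2 / (ℓ - k) := by
    field_simp
    ring
  rw [← sub_pos, hgap]
  exact div_pos (sq_pos_of_ne_zero hℓ) hL

theorem stmt_10_general {ℓ k : ℝ} (hℓ : ℓ < 0) (hkℓ : k < ℓ) {β₁ β₂ β₃ : ℝ → ℝ}
    (hβ₁ : (fun α => β₁ α - k * ℓ / (ℓ - k) * α ^ 2) =o[𝓝[≠] 0] fun α => α ^ 2)
    (hβ₂ : (fun α => β₂ α + ℓ * α ^ 2) =o[𝓝[≠] 0] fun α => α ^ 2)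
    (hβ₃ : (fun α => β₃ α - k * α ^ 2) =o[𝓝[≠] 0] fun α => α ^ 2) :
    ∀ᶠ α in 𝓝[≠] 0, β₃ α < 0 ∧ 0 < β₂ α ∧ β₂ α < β₁ α := by
  have hsq : ∀ᶠ α : ℝ in 𝓝[≠] 0, 0 < α ^ 2 :=
    eventually_mem_nhdsWithin.mono fun _ hα => sq_pos_of_ne_zero hα
  have hzero : (fun α : ℝ => 0 - 0 * α ^ 2) =o[𝓝[≠] 0] fun α => α ^ 2 := by
    simpa only [zero_mul, sub_zero] using isLittleO_zero _ _
  have hβ₂' : (fun α => β₂ α - -ℓ * α ^ 2) =o[𝓝[≠] 0] fun α => α ^ 2 := by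
    simpa only [neg_mul, sub_neg_eq_add] using hβ₂
  exact (eventually_lt_of_sub_mul_isLittleO (hkℓ.trans hℓ) hsq hβ₃ hzero).and <|
    (eventually_lt_of_sub_mul_isLittleO (neg_pos.mpr hℓ) hsq hzero hβ₂').and <|
    eventually_lt_of_sub_mul_isLittleO (neg_lt_mul_div_sub hℓ.ne hkℓ) hsq hβ₂' hβ₁

theorem stmt_10 (ℓ k L : ℝ) (hℓ : ℓ < 0) (hk : k < 0) (hLdef : L = ℓ - k) (hLpos : 0 < L)
    (β₁ β₂ β₃ : ℝ → ℝ) (C ε₀ : ℝ) (hC : 0 < C) (hε₀ : 0 < ε₀)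
    (hβ₁ : ∀ α : ℝ, |α| < ε₀ → |β₁ α - (k * ℓ / L) * α ^ 2| ≤ C * |α| ^ 3)
    (hβ₂ : ∀ α : ℝ, |α| < ε₀ → |β₂ α + ℓ * α ^ 2| ≤ C * |α| ^ 3)
    (hβ₃ : ∀ α : ℝ, |α| < ε₀ → |β₃ α - k * α ^ 2| ≤ C * |α| ^ 3) :
    ∃ ε > (0 : ℝ), ∀ α : ℝ, α ≠ 0 → |α| < ε →
      0 < β₁ α ∧
      (0 < α → 0 < β₂ α ∧ β₂ α < β₁ α) ∧
      (α < 0 → β₃ α < 0 ∧ 0 < β₁ α) := by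
  subst hLdef
  have isLittleO_sq {r : ℝ → ℝ} (hr : ∀ α, |α| < ε₀ → |r α| ≤ C * |α| ^ 3) :
      r =o[𝓝[≠] 0] fun α => α ^ 2 :=
    (isLittleO_pow_of_norm_le_mul_norm_pow (by norm_num) hε₀ hr).mono nhdsWithin_le_nhds
  have hordered := stmt_10_general hℓ (sub_pos.mp hLpos) (isLittleO_sq hβ₁) (isLittleO_sq hβ₂)
    (isLittleO_sq hβ₃)
  obtain ⟨ε, hε, hball⟩ := Metric.eventually_nhds_iff.mp (eventually_nhdsWithin_iff.mp hordered)
  refine ⟨ε, hε, fun α hα hαε => ?_⟩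
  obtain ⟨hβ₃_neg, hβ₂_pos, hβ₂_lt_β₁⟩ := hball (by rwa [Real.dist_0_eq_abs]) hα
  have hβ₁_pos : 0 < β₁ α := hβ₂_pos.trans hβ₂_lt_β₁
  exact ⟨hβ₁_pos, fun _ => ⟨hβ₂_pos, hβ₂_lt_β₁⟩, fun _ => ⟨hβ₃_neg, hβ₁_pos⟩⟩
end

section
/- For every x₀ ∈ (0, 1/(2√2)), the set {x ∈ ℝ : x > 0 and 2x⁴ − x²/2 = 2x₀⁴ − x₀²/2} is exactly the two-element set {x₀, √(1 − 4x₀²)/2}, and x₀ ≠ √(1 − 4x₀²)/2. In particular, the first return ξ⁺(x₀) to the positive x-axis along the level curve of H⁺ through (x₀, 0) satisfies ξ⁺(x₀) = √(1 − 4x₀²)/2. -/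
/-!
The even quartic `x ^ 4 - p * x ^ 2` takes the same value at `x` and `y` exactly when
`(x ^ 2 - y ^ 2) * (x ^ 2 + y ^ 2 - p) = 0`. For positive `x` the first factor gives `x = y` and
the second `x = √(p - y ^ 2)`; the two coincide only at the positive critical point `√(p / 2)`.
Up to the factor `2`, the restriction of `H⁺` to the switching line is this quartic with
`p = 1 / 4`.
-/

theorem pow_four_sub_mul_sq_eq_iff {R : Type*} [CommRing R] [NoZeroDivisors R] {p x y : R} :
    x ^ 4 - p * x ^ 2 = y ^ 4 - p * y ^ 2 ↔ x ^ 2 = y ^ 2 ∨ x ^ 2 + y ^ 2 = p := by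
  have factorization : x ^ 4 - p * x ^ 2 - (y ^ 4 - p * y ^ 2) =
      (x ^ 2 - y ^ 2) * (x ^ 2 + y ^ 2 - p) := by ring
  rw [← sub_eq_zero, factorization, mul_eq_zero, sub_eq_zero, sub_eq_zero]

theorem eq_sqrt_sub_sq_iff_sq_add_sq_eq {p x y : ℝ} (hx : 0 < x) :
    x = √(p - y ^ 2) ↔ x ^ 2 + y ^ 2 = p := by
  rw [eq_comm, Real.sqrt_eq_iff_mul_self_eq_of_pos hx, ← sq, eq_sub_iff_add_eq]

theorem setOf_pos_and_pow_four_sub_mul_sq_eq {p y : ℝ} (hy : 0 < y) (hyp : y ^ 2 < p) :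
    {x : ℝ | 0 < x ∧ x ^ 4 - p * x ^ 2 = y ^ 4 - p * y ^ 2} = {y, √(p - y ^ 2)} := by
  have mem_iff {x : ℝ} (hx : 0 < x) :
      x ^ 4 - p * x ^ 2 = y ^ 4 - p * y ^ 2 ↔ x = y ∨ x = √(p - y ^ 2) := by
    rw [pow_four_sub_mul_sq_eq_iff, sq_eq_sq₀ hx.le hy.le, eq_sqrt_sub_sq_iff_sq_add_sq_eq hx]
  have pos_of_mem {x : ℝ} : x = y ∨ x = √(p - y ^ 2) → 0 < x := by
    rintro (rfl | rfl)
    · exact hy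
    · exact Real.sqrt_pos.mpr (sub_pos.mpr hyp)
  ext x
  exact ⟨fun ⟨hx, h⟩ ↦ (mem_iff hx).mp h, fun h ↦ ⟨pos_of_mem h, (mem_iff (pos_of_mem h)).mpr h⟩⟩

theorem eq_sqrt_sub_sq_self_iff {p y : ℝ} (hy : 0 < y) : y = √(p - y ^ 2) ↔ y = √(p / 2) := by
  rw [eq_sqrt_sub_sq_iff_sq_add_sq_eq hy, eq_comm (b := √(p / 2)),
    Real.sqrt_eq_iff_mul_self_eq_of_pos hy, ← sq, eq_div_iff two_ne_zero, mul_two]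

theorem sqrt_div_eq_sqrt_div_sq (a : ℝ) {b : ℝ} (hb : 0 ≤ b) : √a / b = √(a / b ^ 2) := by
  rw [Real.sqrt_div' a (sq_nonneg b), Real.sqrt_sq hb]

theorem one_div_two_mul_sqrt_two : 1 / (2 * √2) = √(1 / 4 / 2) := by
  rw [← div_div, Real.sqrt_div' _ zero_le_two, show (1 / 4 : ℝ) = (1 / 2) ^ 2 by norm_num,
    Real.sqrt_sq one_half_pos.le]

theorem one_div_two_mul_sqrt_two_lt_one_half : 1 / (2 * √2) < 1 / 2 := by
  rw [one_div_two_mul_sqrt_two, Real.sqrt_lt' one_half_pos]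
  norm_num

theorem stmt_12_general (x₀ : ℝ) (hx₀ : x₀ ∈ Set.Ioo (0 : ℝ) (1 / 2)) :
    {x : ℝ | 0 < x ∧ 2 * x ^ 4 - x ^ 2 / 2 = 2 * x₀ ^ 4 - x₀ ^ 2 / 2}
      = {x₀, √(1 - 4 * x₀ ^ 2) / 2} ∧
    (x₀ = √(1 - 4 * x₀ ^ 2) / 2 ↔ x₀ = 1 / (2 * √2)) := by
  obtain ⟨hpos, hlt⟩ := hx₀
  have conjugate_eq : √(1 - 4 * x₀ ^ 2) / 2 = √(1 / 4 - x₀ ^ 2) := by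
    rw [sqrt_div_eq_sqrt_div_sq _ zero_le_two]
    ring_nf
  have level_iff (x : ℝ) : 2 * x ^ 4 - x ^ 2 / 2 = 2 * x₀ ^ 4 - x₀ ^ 2 / 2 ↔
      x ^ 4 - 1 / 4 * x ^ 2 = x₀ ^ 4 - 1 / 4 * x₀ ^ 2 := by
    constructor <;> intro h <;> linarith
  have sq_lt : x₀ ^ 2 < 1 / 4 := by
    calc x₀ ^ 2 < (1 / 2) ^ 2 := by gcongr
      _ = 1 / 4 := by norm_num
  simp only [level_iff, conjugate_eq, one_div_two_mul_sqrt_two]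
  exact ⟨setOf_pos_and_pow_four_sub_mul_sq_eq hpos sq_lt, eq_sqrt_sub_sq_self_iff hpos⟩

theorem stmt_12 (x₀ : ℝ) (hx₀ : x₀ ∈ Set.Ioo (0 : ℝ) (1 / (2 * Real.sqrt 2))) :
    {x : ℝ | 0 < x ∧ 2 * x ^ 4 - x ^ 2 / 2 = 2 * x₀ ^ 4 - x₀ ^ 2 / 2}
      = {x₀, Real.sqrt (1 - 4 * x₀ ^ 2) / 2} ∧
    x₀ ≠ Real.sqrt (1 - 4 * x₀ ^ 2) / 2 :=
  (stmt_12_general x₀ ⟨hx₀.1, hx₀.2.trans one_div_two_mul_sqrt_two_lt_one_half⟩).imp_right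
    fun h ↦ h.not.mpr hx₀.2.ne
end
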